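/- Let X = A_m with m ≥ 5. Then the symmetric cube of the adjoint module decomposes as: S^3(V_X(ω_1+ω_m)) = V_X(3ω_1+3ω_m) ⊕ V_X(2ω_1+2ω_m) ⊕ V_X(ω_1+ω_m)^{⊕2} ⊕ V_X(ω_2+ω_{m−1}) ⊕ V_X(ω_3+ω_{m−2}) ⊕ V_X(ω_1+ω_2+ω_{m−1}+ω_m) ⊕ V_X(2ω_1+ω_{m−1}) ⊕ V_X(ω_2+2ω_m) ⊕ V_X(0), where for m = 5 the term V_X(ω_3+ω_{m−2}) is V_X(2ω_3). In particular, S^3(V_X(ω_1+ω_m)) is not multiplicity-free, containing V_X(ω_1+ω_m) with multiplicity exactly 2. -/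

import Mathlib

/-!
# Common framework

Over an algebraically closed field of characteristic zero, finite–dimensional rational
representations of a simple algebraic group are semisimple and are determined by their
formal characters, i.e. by elements of the group ring of the (rational) weight lattice;
the character of the irreducible module of highest weight `λ` is pinned down by the
Weyl character formula `A_ρ · χ_λ = A_{λ+ρ}`.

Below we model, completely combinatorially:

* type `A_r` : weights are realised by their traceless representatives in `Fin (r+1) → ℚ`
  (the `gl`-coordinates), and the Weyl group is the symmetric group;
* types `B_n, C_n, D_n` : weights are realised in the standard `ε`-coordinates
  `Fin n → ℚ`, and the Weyl group consists of (signed) permutations, with evenly many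
  sign changes in type `D`;
* an embedding `X = A_r < Y` (classical of type `t` and rank `n`) in which `X` acts on
  the natural module `W` of `Y` irreducibly with highest weight `δ` : the weights of `W`
  are `± w i` (plus one zero weight in type `B`), and restriction of characters is induced
  by the map `v ↦ ∑ i, v i • w i` of weight lattices;
* `IsMFRes t n r δ lam` : the restriction to `X` of the irreducible `Y`-module with
  highest weight `lam` is multiplicity-free, i.e. its character is a sum of distinct
  irreducible characters of `X`.

Dominant weights are always recorded by their (natural number) coordinates in the basis
of fundamental weights, `e n k` being the `k`-th fundamental weight (1-indexed).
-/

noncomputable section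

namespace MFPaper

/-- The Dynkin type of a classical group `B_n = SO_{2n+1}`, `C_n = Sp_{2n}`, `D_n = SO_{2n}`. -/
inductive CType | B | C | D
deriving DecidableEq

/-- The character ring: the integral group ring of a rational weight space
with `k` coordinates. -/
abbrev CharRing (k : ℕ) : Type := AddMonoidAlgebra ℤ (Fin k → ℚ)

/-- The formal exponential `e^v` of a weight `v`. -/
def mono {k : ℕ} (v : Fin k → ℚ) : CharRing k := AddMonoidAlgebra.single v 1

/-- `e n k` : the `k`-th fundamental dominant weight (`1 ≤ k ≤ n`, 1-indexed) of a rank `n`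
group, recorded by its coordinates in the basis of fundamental weights. -/
def e (n k : ℕ) : Fin n → ℕ := fun i => if (i : ℕ) + 1 = k then 1 else 0

/-! ### Type `A_r` -/

/-- The partition (`gl`) lift of the dominant weight of `A_r` with coordinates `d`
in the basis of fundamental weights. -/
def partLift (r : ℕ) (d : Fin r → ℕ) : Fin (r + 1) → ℚ := fun i =>
  ∑ j ∈ Finset.univ.filter (fun j : Fin r => (i : ℕ) ≤ (j : ℕ)), (d j : ℚ)

/-- The traceless (`sl`) representative of the dominant weight of `A_r` with coordinates `d`. -/
def slWt (r : ℕ) (d : Fin r → ℕ) : Fin (r + 1) → ℚ := fun i =>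
  partLift r d i - (∑ j : Fin r, (((j : ℕ) : ℚ) + 1) * (d j : ℚ)) / (r + 1)

/-- A lift of the half-sum of the positive roots of `A_r`. -/
def rhoA (r : ℕ) : Fin (r + 1) → ℚ := fun i => (r : ℚ) - (i : ℕ)

/-- The Weyl alternating sum `A_v = ∑_{σ} sgn(σ) e^{σ v}` for type `A_r`. -/
def altA (r : ℕ) (v : Fin (r + 1) → ℚ) : CharRing (r + 1) :=
  ∑ σ : Equiv.Perm (Fin (r + 1)),
    ((Equiv.Perm.sign σ : ℤˣ) : ℤ) • mono (fun i => v (σ i))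

/-- `IsCharA r d f` : `f` is the formal character of the irreducible `A_r`-module
of highest weight `d` (Weyl character formula). -/
def IsCharA (r : ℕ) (d : Fin r → ℕ) (f : CharRing (r + 1)) : Prop :=
  altA r (rhoA r) * f = altA r (slWt r d + rhoA r)

/-- `Decomp r F c` : the character `F` of a representation of `A_r` decomposes as
`∑_μ (c μ) · χ_μ`, i.e. the irreducible of highest weight `μ` occurs in it as a
composition factor with multiplicity `c μ`. -/
def Decomp (r : ℕ) (F : CharRing (r + 1)) (c : (Fin r → ℕ) →₀ ℕ) : Prop :=
  F * altA r (rhoA r) = c.sum fun μ k => (k : ℤ) • altA r (slWt r μ + rhoA r)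

/-- The Weyl dimension formula for type `A_r`. -/
def dimA (r : ℕ) (d : Fin r → ℕ) : ℚ :=
  ∏ p ∈ Finset.univ.filter (fun p : Fin (r + 1) × Fin (r + 1) => (p.1 : ℕ) < (p.2 : ℕ)),
    ((partLift r d p.1 - partLift r d p.2 + ((p.2 : ℕ) : ℚ) - ((p.1 : ℕ) : ℚ)) /
      (((p.2 : ℕ) : ℚ) - ((p.1 : ℕ) : ℚ)))

/-- The self-dual irreducible `A_r`-module of highest weight `d` is *symplectic*
(it carries an invariant alternating form); by Steinberg's criterion this happens
exactly when `⟨d, 2ρ^∨⟩ = ∑ d_k · k(r+1-k)` is odd. -/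
def IsSympWt (r : ℕ) (d : Fin r → ℕ) : Prop :=
  Odd (∑ i : Fin r, d i * ((i : ℕ) + 1) * (r - (i : ℕ)))

/-! ### The classical types `B`, `C`, `D` -/

/-- Convenient access to the `k`-th (0-indexed) coordinate. -/
def cval {n : ℕ} (c : Fin n → ℕ) (k : ℕ) : ℚ := if h : k < n then (c ⟨k, h⟩ : ℚ) else 0

/-- `ε`-coordinates of the dominant weight of the classical group of type `t` and rank `n`
with coordinates `c` in the basis of fundamental weights (Bourbaki numbering). -/
def epsWt (t : CType) (n : ℕ) (c : Fin n → ℕ) : Fin n → ℚ := fun i =>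
  (∑ k ∈ Finset.univ.filter (fun k : Fin n => (i : ℕ) ≤ (k : ℕ)), (c k : ℚ)) -
    (match t with
      | .C => 0
      | .B => cval c (n - 1) / 2
      | .D => (cval c (n - 2) + cval c (n - 1)) / 2)

/-- The half-sum of the positive roots in `ε`-coordinates. -/
def rhoY (t : CType) (n : ℕ) : Fin n → ℚ := fun i =>
  match t with
  | .C => (n : ℚ) - (i : ℕ)
  | .B => (n : ℚ) - (i : ℕ) - 1 / 2
  | .D => (n : ℚ) - 1 - (i : ℕ)

/-- The Weyl alternating sum for the classical group of type `t` and rank `n`: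
the Weyl group consists of the signed permutations of the coordinates,
with evenly many sign changes in type `D`. -/
def altY (t : CType) (n : ℕ) (v : Fin n → ℚ) : CharRing n :=
  ∑ σ : Equiv.Perm (Fin n), ∑ s : Fin n → Bool,
    if t = CType.D ∧ ¬ Even (Finset.univ.filter (fun i => s i = true)).card then 0
    else (((Equiv.Perm.sign σ : ℤˣ) : ℤ) *
          (-1) ^ (Finset.univ.filter (fun i => s i = true)).card) •
      mono (fun i => (if s i then -1 else 1) * v (σ i))

/-- `IsCharY t n c f` : `f` is the formal character of the irreducible module of highest
weight `c` for the classical group of type `t` and rank `n` (Weyl character formula). -/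
def IsCharY (t : CType) (n : ℕ) (c : Fin n → ℕ) (f : CharRing n) : Prop :=
  altY t n (rhoY t n) * f = altY t n (epsWt t n c + rhoY t n)

/-! ### The embedding `X = A_r < Y` via `δ`, and restriction of characters -/

/-- `WtSys t n r δ w` : `w` lists "half" of the weights of the natural module
`W = V_X(δ)` of the classical group `Y` of type `t` and rank `n`, for `X = A_r`:
the weights of `W` (with multiplicity) are exactly the `± w i`, together with one
extra zero weight in type `B`.  Such a `w` records a maximal torus embedding
`T_X → T_Y` realising the irreducible embedding `X < Y = SO(W)` or `Sp(W)` given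
by the representation of highest weight `δ`. -/
def WtSys (t : CType) (n r : ℕ) (δ : Fin r → ℕ)
    (w : Fin n → (Fin (r + 1) → ℚ)) : Prop :=
  ((∑ i : Fin n, (mono (w i) + mono (-(w i)))) +
      (if t = CType.B then mono (0 : Fin (r + 1) → ℚ) else 0)) * altA r (rhoA r)
    = altA r (slWt r δ + rhoA r)

/-- Restriction of characters from `Y` to `X = A_r` along the torus embedding
recorded by `w`. -/
def resChar {n r : ℕ} (w : Fin n → (Fin (r + 1) → ℚ)) (F : CharRing n) :
    CharRing (r + 1) :=
  AddMonoidAlgebra.mapDomain (fun v : Fin n → ℚ => ∑ i : Fin n, v i • w i) F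

/-- `IsMFRes t n r δ lam` : in the embedding `X = A_r < Y` (the classical group of type
`t` and rank `n`) given by the irreducible representation of highest weight `δ`, the
restriction to `X` of the irreducible `Y`-module of highest weight `lam` is
multiplicity-free: its character is a sum of *distinct* irreducible characters of `X`. -/
def IsMFRes (t : CType) (n r : ℕ) (δ : Fin r → ℕ) (lam : Fin n → ℕ) : Prop :=
  ∀ w, WtSys t n r δ w → ∀ f, IsCharY t n lam f →
    ∃ c : (Fin r → ℕ) →₀ ℕ, Decomp r (resChar w f) c ∧ ∀ μ, c μ ≤ 1

/-- The operation `e^v ↦ e^{k·v}` on characters (Adams operation on the torus),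
used to express symmetric and exterior powers of characters. -/
def pw {m : ℕ} (k : ℕ) (F : CharRing m) : CharRing m :=
  AddMonoidAlgebra.mapDomain (fun v : Fin m → ℚ => (k : ℚ) • v) F

/-- The irreducible `A_r`-module of highest weight `d` carries a nonzero invariant
*symmetric* bilinear form, i.e. the trivial module occurs in its symmetric square
(whose character `S` satisfies `2S = f² + f^{[2]}`). -/
def HasSymForm (r : ℕ) (d : Fin r → ℕ) : Prop :=
  ∀ f, IsCharA r d f →
    ∃ c : (Fin r → ℕ) →₀ ℕ,
      (f * f + pw 2 f) * altA r (rhoA r)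
          = c.sum (fun μ k => ((2 * k : ℕ) : ℤ) • altA r (slWt r μ + rhoA r)) ∧ 1 ≤ c 0

/-- The irreducible `A_r`-module of highest weight `d` carries a nonzero invariant
*alternating* bilinear form, i.e. the trivial module occurs in its exterior square
(whose character `Λ` satisfies `2Λ = f² - f^{[2]}`). -/
def HasAltForm (r : ℕ) (d : Fin r → ℕ) : Prop :=
  ∀ f, IsCharA r d f →
    ∃ c : (Fin r → ℕ) →₀ ℕ,
      (f * f - pw 2 f) * altA r (rhoA r)
          = c.sum (fun μ k => ((2 * k : ℕ) : ℤ) • altA r (slWt r μ + rhoA r)) ∧ 1 ≤ c 0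

end MFPaper

open MFPaper

/-!
Let `p_k = ∑ e^{k ε_i}`, for `k` of either sign, and let `A_ρ` be the Weyl denominator of `A_m`. The
adjoint character is `f = p_1 p_{-1} - 1`, so `f ^ 3 + 3 f f^{[2]} + 2 f^{[3]}` is a polynomial in
the products `p_k p_{-k}` with `k ≤ 3`. Multiplication by `p_k` either adds `k` boxes to the
positive part of a weight or removes `k` boxes from its negative part, and the removals act as
`k ∂/∂p_{-k}`. Moving the removals out of the way by this Heisenberg relation expresses `A_ρ` times
a product of power sums in terms of normally ordered products, in which boxes are only added.
Straightening turns a normally ordered product into the alternants of the weights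
`(α, 0, …, 0, -β)`, with coefficients the products of symmetric group characters prescribed by
Frobenius' formula; the orthogonality of the characters of `S₃` then leaves six times the asserted
sum. The multiplicities are determined by `S³` because the alternants of distinct strictly
decreasing weights are linearly independent.
-/

namespace MFPaper

section Straightening

variable {p : ℕ} {M N : Type*} [AddCommGroup M] [AddCommGroup N]

/-- Index form of the product of a Schur function `s_a` with the power sum `p_k`: a functional `φ`
of the index `a`, possibly not a partition, becomes `a ↦ ∑ i, φ (a + k ε_i)`. -/
def shiftSum (k : ℤ) : ((Fin p → ℤ) → M) →+ ((Fin p → ℤ) → M) where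
  toFun φ a := ∑ i, φ (a + Pi.single i k)
  map_zero' := by ext; simp
  map_add' φ ψ := by ext; simp [Finset.sum_add_distrib]

lemma shiftSum_apply (k : ℤ) (φ : (Fin p → ℤ) → M) (a : Fin p → ℤ) :
    shiftSum k φ a = ∑ i, φ (a + Pi.single i k) := rfl

lemma map_shiftSum (f : M →+ N) (k : ℤ) (φ : (Fin p → ℤ) → M) :
    f ∘ shiftSum k φ = shiftSum k (f ∘ φ) := by
  ext; simp [shiftSum_apply]

/-- The dot action of the transposition `(i j)`: it permutes the entries of `a - (0, …, p - 1)`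
rather than those of `a`. -/
def dotSwap (i j : Fin p) (a : Fin p → ℤ) : Fin p → ℤ :=
  fun k => a (Equiv.swap i j k) - (Equiv.swap i j k : ℕ) + (k : ℕ)

lemma dotSwap_add_single (i j l : Fin p) (a : Fin p → ℤ) (k : ℤ) :
    dotSwap i j a + Pi.single (Equiv.swap i j l) k = dotSwap i j (a + Pi.single l k) := by
  ext x
  have hx : Equiv.swap i j x = l ↔ x = Equiv.swap i j l := Equiv.swap_apply_eq_iff
  simp only [dotSwap, Pi.add_apply, Pi.single_apply, hx]
  ring

/-- The functionals with the straightening law of Schur functions: the dot action of a transposition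
changes their sign. -/
def dotAlternating (p : ℕ) (M : Type*) [AddCommGroup M] : AddSubgroup ((Fin p → ℤ) → M) where
  carrier := {φ | ∀ (a : Fin p → ℤ) (i j : Fin p), i ≠ j → φ (dotSwap i j a) = -φ a}
  zero_mem' _ _ _ _ := by simp
  add_mem' hφ hψ a i j hij := by simp [hφ a i j hij, hψ a i j hij, add_comm]
  neg_mem' hφ a i j hij := by simp [hφ a i j hij]

lemma comp_mem_dotAlternating (f : M →+ N) {φ : (Fin p → ℤ) → M} (hφ : φ ∈ dotAlternating p M) :
    f ∘ φ ∈ dotAlternating p N := fun a i j hij => by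
  simp only [Function.comp_apply, hφ a i j hij, map_neg]

lemma shiftSum_mem_dotAlternating (k : ℤ) {φ : (Fin p → ℤ) → M} (hφ : φ ∈ dotAlternating p M) :
    shiftSum k φ ∈ dotAlternating p M := fun a i j hij => by
  rw [shiftSum_apply, shiftSum_apply, ← Equiv.sum_comp (Equiv.swap i j), ← Finset.sum_neg_distrib]
  exact Finset.sum_congr rfl fun l _ => by rw [dotSwap_add_single, hφ _ i j hij]

lemma apply_eq_zero_of_sub_eq_sub [IsAddTorsionFree M] {φ : (Fin p → ℤ) → M}
    (hφ : φ ∈ dotAlternating p M) {a : Fin p → ℤ} {i j : Fin p} (hij : i ≠ j)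
    (h : a i - (i : ℕ) = a j - (j : ℕ)) : φ a = 0 := by
  have hfix : dotSwap i j a = a := by
    ext k
    rcases eq_or_ne k i with rfl | hi
    · simp [dotSwap, ← h]
    rcases eq_or_ne k j with rfl | hj
    · simp [dotSwap, h]
    · simp [dotSwap, Equiv.swap_apply_of_ne_of_ne hi hj]
  exact self_eq_neg.1 (by simpa only [hfix] using hφ a i j hij)

/-- Linear extension of `s_a ↦ φ a`, evaluated at the product of the power sums `p_k`, `k ∈ l`. -/
def evalPowerSums : List ℕ → ((Fin p → ℤ) → M) →+ M
  | [] => Pi.evalAddMonoidHom _ 0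
  | k :: l => (evalPowerSums l).comp (shiftSum k)

@[simp]
lemma evalPowerSums_nil (φ : (Fin p → ℤ) → M) : evalPowerSums [] φ = φ 0 := rfl

@[simp]
lemma evalPowerSums_cons (k : ℕ) (l : List ℕ) (φ : (Fin p → ℤ) → M) :
    evalPowerSums (k :: l) φ = evalPowerSums l (shiftSum k φ) := rfl

lemma map_evalPowerSums (f : M →+ N) (l : List ℕ) (φ : (Fin p → ℤ) → M) :
    f (evalPowerSums l φ) = evalPowerSums l (f ∘ φ) := by
  induction l generalizing φ with
  | nil => rfl
  | cons k l ih => rw [evalPowerSums_cons, evalPowerSums_cons, ih, map_shiftSum]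

lemma evalPowerSums_mem (S : AddSubgroup M) (l : List ℕ) {φ : (Fin p → ℤ) → M}
    (hφ : ∀ a, φ a ∈ S) : evalPowerSums l φ ∈ S := by
  induction l generalizing φ with
  | nil => exact hφ 0
  | cons k _ ih =>
    refine ih fun a => ?_
    rw [shiftSum_apply]
    exact S.sum_mem fun i _ => hφ _

lemma evalPowerSums_eq_zero [IsAddTorsionFree M] {φ : (Fin p → ℤ) → M}
    (hφ : φ ∈ dotAlternating p M) (l : List ℕ) {k : ℕ} (hl : l.sum + k ≤ p)
    (h : ∀ a : Fin p → ℤ, (∀ i : Fin p, p ≤ i + k → a i = 0) → φ a = 0) :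
    evalPowerSums l φ = 0 := by
  induction l generalizing φ k with
  | nil => exact h 0 fun _ _ => rfl
  | cons n l ih =>
    rw [List.sum_cons] at hl
    refine ih (shiftSum_mem_dotAlternating n hφ) (k := n + k) (by omega) fun a ha => ?_
    rw [shiftSum_apply]
    refine Finset.sum_eq_zero fun i _ => ?_
    by_cases hi : p ≤ i + k ∧ n ≠ 0
    · -- slot `i` is raised onto slot `i - n`, which is still empty
      have hne : i ≠ ⟨i - n, by omega⟩ := by simp only [ne_eq, Fin.ext_iff]; omega
      refine apply_eq_zero_of_sub_eq_sub hφ hne ?_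
      simp only [Pi.add_apply, ha i (by omega), ha ⟨i - n, _⟩ (by simp only; omega),
        Pi.single_eq_same, Pi.single_eq_of_ne hne.symm]
      push_cast [show n ≤ (i : ℕ) by omega]
      ring
    · refine h _ fun j hj => ?_
      rw [Pi.add_apply, ha j (by omega), zero_add, Pi.single_apply]
      split_ifs with hji
      · subst hji; simp; omega
      · rfl

lemma evalPowerSums_congr [IsAddTorsionFree M] {φ ψ : (Fin p → ℤ) → M}
    (hφ : φ ∈ dotAlternating p M) (hψ : ψ ∈ dotAlternating p M) (l : List ℕ) {k : ℕ}
    (hl : l.sum + k ≤ p)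
    (h : ∀ a : Fin p → ℤ, (∀ i : Fin p, p ≤ i + k → a i = 0) → φ a = ψ a) :
    evalPowerSums l φ = evalPowerSums l ψ := by
  rw [← sub_eq_zero, ← map_sub]
  exact evalPowerSums_eq_zero (sub_mem hφ hψ) l hl fun a ha => sub_eq_zero.2 (h a ha)

/-- `φ a` vanishes as soon as an entry of `a` is straightened into one of the `k` empty slots
`p, …, p + k - 1` that follow the `p` slots of `a`. -/
def HasWall (k : ℕ) (φ : (Fin p → ℤ) → M) : Prop :=
  ∀ (a : Fin p → ℤ) (i : Fin p), -(p + k : ℤ) < a i - (i : ℕ) → a i - (i : ℕ) ≤ -p → φ a = 0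

lemma shiftSum_neg_zero [IsAddTorsionFree M] {φ : (Fin p → ℤ) → M} (hφ : φ ∈ dotAlternating p M)
    {k : ℕ} (hk : k ≠ 0) (hw : HasWall k φ) : shiftSum (-k) φ 0 = 0 := by
  rw [shiftSum_apply]
  refine Finset.sum_eq_zero fun i _ => ?_
  rw [zero_add]
  by_cases hi : i + k < p
  · have hne : i ≠ ⟨i + k, hi⟩ := by simp only [ne_eq, Fin.ext_iff]; omega
    refine apply_eq_zero_of_sub_eq_sub hφ hne ?_
    simp only [Pi.single_eq_same, Pi.single_eq_of_ne hne.symm]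
    push_cast
    ring
  · exact hw _ i (by simp only [Pi.single_eq_same]; omega) (by simp only [Pi.single_eq_same]; omega)

end Straightening

section ThreeSlots

variable {M : Type*} [AddCommGroup M] {φ : (Fin 3 → ℤ) → M}

lemma shiftSum_vec (k : ℤ) (φ : (Fin 3 → ℤ) → M) (a b c : ℤ) :
    shiftSum k φ ![a, b, c] = φ ![a + k, b, c] + φ ![a, b + k, c] + φ ![a, b, c + k] := by
  have h₀ : ![a, b, c] + Pi.single 0 k = ![a + k, b, c] := by ext i; fin_cases i <;> simp
  have h₁ : ![a, b, c] + Pi.single 1 k = ![a, b + k, c] := by ext i; fin_cases i <;> simp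
  have h₂ : ![a, b, c] + Pi.single 2 k = ![a, b, c + k] := by ext i; fin_cases i <;> simp
  rw [shiftSum_apply, Fin.sum_univ_three, h₀, h₁, h₂]

lemma evalPowerSums_nil_vec (φ : (Fin 3 → ℤ) → M) : evalPowerSums [] φ = φ ![0, 0, 0] := by
  rw [evalPowerSums_nil]
  congr 1
  ext i; fin_cases i <;> rfl

lemma straighten_fst (hφ : φ ∈ dotAlternating 3 M) (a b c : ℤ) :
    φ ![a, b, c] = -φ ![b - 1, a + 1, c] := by
  rw [← neg_eq_iff_eq_neg, ← hφ _ 0 1 (by decide)]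
  congr 1
  ext i; fin_cases i <;> simp [dotSwap, Equiv.swap_apply_of_ne_of_ne]

lemma straighten_snd (hφ : φ ∈ dotAlternating 3 M) (a b c : ℤ) :
    φ ![a, b, c] = -φ ![a, c - 1, b + 1] := by
  rw [← neg_eq_iff_eq_neg, ← hφ _ 1 2 (by decide)]
  congr 1
  ext i; fin_cases i <;> simp [dotSwap, Equiv.swap_apply_of_ne_of_ne] <;> ring

lemma apply_eq_zero_of_fst_add_one [IsAddTorsionFree M] (hφ : φ ∈ dotAlternating 3 M) {a b c : ℤ}
    (h : b = a + 1) : φ ![a, b, c] = 0 :=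
  apply_eq_zero_of_sub_eq_sub hφ (i := 0) (j := 1) (by decide) (by simp [h])

lemma apply_eq_zero_of_snd_add_one [IsAddTorsionFree M] (hφ : φ ∈ dotAlternating 3 M) {a b c : ℤ}
    (h : c = b + 1) : φ ![a, b, c] = 0 :=
  apply_eq_zero_of_sub_eq_sub hφ (i := 1) (j := 2) (by decide) (by simp [h]; ring)

lemma apply_eq_zero_of_hasWall {k : ℕ} (hw : HasWall k φ) {a b c : ℤ} (hc : c < 0) (hk : -k ≤ c) :
    φ ![a, b, c] = 0 :=
  hw _ 2 (by simp; omega) (by simp; omega)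

end ThreeSlots

section PowerSumRules

variable {M : Type*} [AddCommGroup M] {φ : (Fin 3 → ℤ) → M}

lemma evalPowerSums_three (hφ : φ ∈ dotAlternating 3 M) :
    evalPowerSums [3] φ = φ ![3, 0, 0] - φ ![2, 1, 0] + φ ![1, 1, 1] := by
  simp only [evalPowerSums_cons, evalPowerSums_nil_vec, shiftSum_vec]
  simp [straighten_snd hφ 0 0 3, straighten_fst hφ 0 3 0, straighten_fst hφ 0 2 1]
  abel

lemma evalPowerSums_three_shiftSum_neg_three (hφ : φ ∈ dotAlternating 3 M) (hw : HasWall 3 φ) :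
    evalPowerSums [3] (shiftSum (-3) φ) = 3 • evalPowerSums [] φ := by
  simp only [evalPowerSums_cons, evalPowerSums_nil_vec, shiftSum_vec]
  simp [straighten_fst hφ (-3) 0 3, straighten_fst hφ (-3) 3 0, straighten_snd hφ 0 (-3) 3,
    straighten_snd hφ 3 (-3) 0, straighten_snd hφ (-1) (-2) 3, straighten_snd hφ 2 (-2) 0,
    apply_eq_zero_of_hasWall hw]
  abel

variable [IsAddTorsionFree M]

lemma evalPowerSums_one (hφ : φ ∈ dotAlternating 3 M) :
    evalPowerSums [1] φ = φ ![1, 0, 0] := by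
  simp only [evalPowerSums_cons, evalPowerSums_nil_vec, shiftSum_vec]
  simp [apply_eq_zero_of_fst_add_one hφ, apply_eq_zero_of_snd_add_one hφ]

lemma evalPowerSums_one_one (hφ : φ ∈ dotAlternating 3 M) :
    evalPowerSums [1, 1] φ = φ ![2, 0, 0] + φ ![1, 1, 0] := by
  simp only [evalPowerSums_cons, evalPowerSums_nil_vec, shiftSum_vec]
  simp [straighten_snd hφ 0 0 2, straighten_fst hφ 0 2 0, apply_eq_zero_of_fst_add_one hφ,
    apply_eq_zero_of_snd_add_one hφ]

lemma evalPowerSums_one_one_one (hφ : φ ∈ dotAlternating 3 M) :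
    evalPowerSums [1, 1, 1] φ = φ ![3, 0, 0] + 2 • φ ![2, 1, 0] + φ ![1, 1, 1] := by
  simp only [evalPowerSums_cons, evalPowerSums_nil_vec, shiftSum_vec]
  simp [straighten_snd hφ 0 0 3, straighten_fst hφ 0 2 1, straighten_fst hφ 0 3 0,
    straighten_snd hφ 1 0 2, apply_eq_zero_of_fst_add_one hφ, apply_eq_zero_of_snd_add_one hφ]
  abel

lemma evalPowerSums_two_one (hφ : φ ∈ dotAlternating 3 M) :
    evalPowerSums [2, 1] φ = φ ![3, 0, 0] - φ ![1, 1, 1] := by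
  simp only [evalPowerSums_cons, evalPowerSums_nil_vec, shiftSum_vec]
  simp [straighten_snd hφ 0 0 3, straighten_fst hφ 0 2 1, straighten_fst hφ 0 3 0,
    straighten_snd hφ 1 0 2, apply_eq_zero_of_fst_add_one hφ, apply_eq_zero_of_snd_add_one hφ]
  abel

lemma evalPowerSums_one_shiftSum_neg_one (hφ : φ ∈ dotAlternating 3 M) (hw : HasWall 1 φ) :
    evalPowerSums [1] (shiftSum (-1) φ) = 1 • evalPowerSums [] φ := by
  simp only [evalPowerSums_cons, evalPowerSums_nil_vec, shiftSum_vec]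
  simp [straighten_fst hφ (-1) 1 0, straighten_snd hφ 0 (-1) 1, apply_eq_zero_of_fst_add_one hφ,
    apply_eq_zero_of_snd_add_one hφ, apply_eq_zero_of_hasWall hw]

lemma evalPowerSums_one_one_shiftSum_neg_one (hφ : φ ∈ dotAlternating 3 M) (hw : HasWall 1 φ) :
    evalPowerSums [1, 1] (shiftSum (-1) φ) = 2 • evalPowerSums [1] φ := by
  simp only [evalPowerSums_cons, evalPowerSums_nil_vec, shiftSum_vec]
  simp [straighten_fst hφ (-1) 1 1, straighten_fst hφ (-1) 2 0, straighten_snd hφ 0 (-1) 2,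
    straighten_snd hφ 1 (-1) 1, apply_eq_zero_of_fst_add_one hφ, apply_eq_zero_of_snd_add_one hφ,
    apply_eq_zero_of_hasWall hw]
  abel

lemma evalPowerSums_one_one_one_shiftSum_neg_one (hφ : φ ∈ dotAlternating 3 M) (hw : HasWall 1 φ) :
    evalPowerSums [1, 1, 1] (shiftSum (-1) φ) = 3 • evalPowerSums [1, 1] φ := by
  simp only [evalPowerSums_cons, evalPowerSums_nil_vec, shiftSum_vec]
  simp [straighten_fst hφ (-1) 2 1, straighten_fst hφ (-1) 3 0, straighten_snd hφ 0 (-1) 3,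
    straighten_snd hφ 0 0 2, straighten_fst hφ 0 2 0, straighten_snd hφ 1 (-1) 2,
    straighten_snd hφ 2 (-1) 1, apply_eq_zero_of_fst_add_one hφ, apply_eq_zero_of_snd_add_one hφ,
    apply_eq_zero_of_hasWall hw]
  abel

lemma evalPowerSums_two_one_shiftSum_neg_one (hφ : φ ∈ dotAlternating 3 M) (hw : HasWall 1 φ) :
    evalPowerSums [2, 1] (shiftSum (-1) φ) = 1 • evalPowerSums [2] φ := by
  simp only [evalPowerSums_cons, evalPowerSums_nil_vec, shiftSum_vec]
  simp [straighten_fst hφ (-1) 2 1, straighten_fst hφ (-1) 3 0, straighten_snd hφ 0 (-1) 3,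
    straighten_snd hφ 0 0 2, straighten_fst hφ 0 2 0, straighten_snd hφ 1 (-1) 2,
    straighten_snd hφ 2 (-1) 1, apply_eq_zero_of_fst_add_one hφ, apply_eq_zero_of_snd_add_one hφ,
    apply_eq_zero_of_hasWall hw]

lemma evalPowerSums_two_shiftSum_neg_two (hφ : φ ∈ dotAlternating 3 M) (hw : HasWall 2 φ) :
    evalPowerSums [2] (shiftSum (-2) φ) = 2 • evalPowerSums [] φ := by
  simp only [evalPowerSums_cons, evalPowerSums_nil_vec, shiftSum_vec]
  simp [straighten_fst hφ (-2) 0 2, straighten_fst hφ (-2) 2 0, straighten_snd hφ 0 (-2) 2,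
    straighten_snd hφ 2 (-2) 0, straighten_snd hφ (-1) (-1) 2, straighten_fst hφ (-1) 1 0,
    apply_eq_zero_of_snd_add_one hφ, apply_eq_zero_of_hasWall hw]
  abel

lemma evalPowerSums_two_one_shiftSum_neg_two (hφ : φ ∈ dotAlternating 3 M) (hw : HasWall 2 φ) :
    evalPowerSums [2, 1] (shiftSum (-2) φ) = 2 • evalPowerSums [1] φ := by
  simp only [evalPowerSums_cons, evalPowerSums_nil_vec, shiftSum_vec]
  simp [straighten_fst hφ (-2) 0 3, straighten_fst hφ (-2) 2 1, straighten_fst hφ (-2) 3 0,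
    straighten_fst hφ (-1) 2 0, straighten_snd hφ 0 (-2) 3, straighten_snd hφ 0 (-1) 2,
    straighten_snd hφ 1 (-2) 2, straighten_snd hφ 2 (-2) 1, straighten_snd hφ 3 (-2) 0,
    straighten_snd hφ (-1) (-1) 3, straighten_snd hφ 1 (-1) 1, apply_eq_zero_of_fst_add_one hφ,
    apply_eq_zero_of_snd_add_one hφ, apply_eq_zero_of_hasWall hw]
  abel

end PowerSumRules

section Alternants

instance (k : ℕ) : IsAddTorsionFree (CharRing k) where
  nsmul_right_injective n hn x y hxy := by
    ext v
    have hv := congrArg (fun z : CharRing k => z.coeff v) hxy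
    simpa only [AddMonoidAlgebra.coeff_smul, Finsupp.smul_apply, smul_right_inj hn] using hv

lemma mono_mul {k : ℕ} (v w : Fin k → ℚ) : mono v * mono w = mono (v + w) := by
  simp [mono, AddMonoidAlgebra.single_mul_single]

/-- The ring endomorphism `e^v ↦ e^{c v}`; for natural `c` it is the Adams operation `pw c`, and
for `c = -1` it is the duality of characters. -/
def dilate {k : ℕ} (c : ℚ) : CharRing k →+* CharRing k :=
  AddMonoidAlgebra.mapDomainRingHom ℤ (DistribSMul.toAddMonoidHom (Fin k → ℚ) c)

lemma pw_eq_dilate {k : ℕ} (n : ℕ) (F : CharRing k) : pw n F = dilate (n : ℚ) F := rfl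

lemma dilate_mono {k : ℕ} (c : ℚ) (v : Fin k → ℚ) : dilate c (mono v) = mono (c • v) := by
  simp [dilate, mono, AddMonoidAlgebra.mapDomain_single]

variable {r : ℕ}

/-- The power sum `p_c = ∑ e^{c ε_i}`; `p_{-c}` is the power sum of the inverse variables. -/
def powerSum (r : ℕ) (c : ℚ) : CharRing (r + 1) := ∑ i, mono (Pi.single i c)

lemma dilate_powerSum (c d : ℚ) : dilate c (powerSum r d) = powerSum r (c * d) := by
  simp only [powerSum, map_sum, dilate_mono, ← Pi.single_smul, smul_eq_mul]

lemma altA_mul_powerSum (v : Fin (r + 1) → ℚ) (c : ℚ) :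
    altA r v * powerSum r c = ∑ i, altA r (v + Pi.single i c) := by
  unfold altA powerSum
  rw [Finset.sum_mul, Finset.sum_comm]
  refine Finset.sum_congr rfl fun σ _ => ?_
  rw [Finset.mul_sum]
  refine Fintype.sum_equiv σ _ _ fun i => ?_
  have hσ : (fun j => (v + Pi.single (σ i) c : Fin (r + 1) → ℚ) (σ j)) =
      (fun j => v (σ j)) + Pi.single i c := by
    ext j
    simp [Pi.single_apply]
  rw [smul_mul_assoc, mono_mul, hσ]

lemma dilate_altA (c : ℚ) (v : Fin (r + 1) → ℚ) : dilate c (altA r v) = altA r (c • v) := by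
  simp only [altA, map_sum, map_zsmul, dilate_mono]
  rfl

lemma altA_add_const (v : Fin (r + 1) → ℚ) (c : ℚ) :
    altA r (v + fun _ => c) = mono (fun _ => c) * altA r v := by
  rw [altA, altA, Finset.mul_sum]
  refine Finset.sum_congr rfl fun σ _ => ?_
  rw [mul_smul_comm, mono_mul, add_comm (fun _ => c)]
  rfl

lemma altA_comp_perm (v : Fin (r + 1) → ℚ) (τ : Equiv.Perm (Fin (r + 1))) :
    altA r (v ∘ τ) = (Equiv.Perm.sign τ : ℤ) • altA r v := by
  rw [altA, altA, Finset.smul_sum, ← Equiv.sum_comp (Equiv.mulLeft τ) fun σ => _ • _ • _]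
  refine Finset.sum_congr rfl fun σ _ => ?_
  have hsign : (Equiv.Perm.sign τ * (Equiv.Perm.sign τ * Equiv.Perm.sign σ) : ℤ) =
      Equiv.Perm.sign σ := by
    rw [← mul_assoc, Int.units_coe_mul_self, one_mul]
  simp only [Equiv.coe_mulLeft, Equiv.Perm.sign_mul, Units.val_mul, smul_smul, hsign,
    Function.comp_apply, Equiv.Perm.mul_apply]

lemma altA_comp_swap (v : Fin (r + 1) → ℚ) {i j : Fin (r + 1)} (hij : i ≠ j) :
    altA r (v ∘ Equiv.swap i j) = -altA r v := by
  rw [altA_comp_perm, Equiv.Perm.sign_swap hij]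
  simp

lemma altA_eq_zero {v : Fin (r + 1) → ℚ} {i j : Fin (r + 1)} (hij : i ≠ j) (h : v i = v j) :
    altA r v = 0 := by
  have hfix : v ∘ Equiv.swap i j = v := by
    rw [Equiv.comp_swap_eq_update, h, Function.update_eq_self, ← h, Function.update_eq_self]
  exact self_eq_neg.1 (by simpa only [hfix] using altA_comp_swap v hij)

end Alternants

section TwoSided

variable {p m : ℕ}

/-- The sequence `a` continued by zeros. -/
def pad (a : Fin p → ℤ) (i : ℕ) : ℤ := if h : i < p then a ⟨i, h⟩ else 0

lemma pad_val (a : Fin p → ℤ) (i : Fin p) : pad a i = a i := dif_pos i.2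

lemma pad_of_le (a : Fin p → ℤ) {i : ℕ} (hi : p ≤ i) : pad a i = 0 := dif_neg hi.not_gt

lemma pad_eq_zero {a : Fin p → ℤ} {k : ℕ} (ha : ∀ i : Fin p, p ≤ i + k → a i = 0) {i : ℕ}
    (hi : p ≤ i + k) : pad a i = 0 := by
  unfold pad
  split_ifs
  · exact ha _ hi
  · rfl

lemma pad_add (a b : Fin p → ℤ) (i : ℕ) : pad (a + b) i = pad a i + pad b i := by
  unfold pad
  split_ifs <;> simp

lemma pad_single (i : Fin p) (k : ℤ) (j : ℕ) :
    pad (Pi.single i k) j = if j = i then k else 0 := by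
  unfold pad
  split_ifs <;> simp_all [Fin.ext_iff]

/-- The `gl`-weight `(a, 0, …, 0, -b reversed)` of `A_m`. -/
def biWeight (m : ℕ) (a b : Fin p → ℤ) : Fin (m + 1) → ℚ :=
  fun i => pad a i - pad b (m - i)

/-- The alternant of `biWeight m a b`: the Weyl numerator of the composite Schur function
`s_{a, b}`, for arbitrary integer sequences `a` and `b`. -/
def biAlt (m : ℕ) (a b : Fin p → ℤ) : CharRing (m + 1) := altA m (biWeight m a b + rhoA m)

lemma biAlt_zero_zero (m : ℕ) : biAlt m (0 : Fin p → ℤ) 0 = altA m (rhoA m) := by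
  have h : biWeight m (0 : Fin p → ℤ) 0 = 0 := by
    ext i
    simp [biWeight, pad]
  rw [biAlt, h, zero_add]

/-- Dualising exchanges `a` and `b`, up to the factor `c` by which the dual of `A_ρ` differs from
`A_ρ`. -/
lemma exists_biAlt_swap (m p : ℕ) : ∃ c : CharRing (m + 1), ∀ a b : Fin p → ℤ,
    biAlt m b a = c * dilate (-1) (biAlt m a b) := by
  refine ⟨(Equiv.Perm.sign (Fin.revPerm (n := m + 1)) : ℤ) • mono fun _ => (m : ℚ), fun a b => ?_⟩
  have hw : biWeight m b a + rhoA m =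
      ((-1 : ℚ) • (biWeight m a b + rhoA m)) ∘ Fin.revPerm + fun _ => (m : ℚ) := by
    ext i
    have hi : (i : ℕ) ≤ m := by omega
    simp [biWeight, rhoA, Fin.val_rev, Nat.add_sub_add_right, Nat.sub_sub_self hi, Nat.cast_sub hi]
    ring
  rw [biAlt, hw, altA_add_const, altA_comp_perm, ← dilate_altA, smul_mul_assoc, mul_smul_comm]
  rfl

lemma biWeight_castLE (hp : 2 * p ≤ m + 1) (a b : Fin p → ℤ) (i : Fin p) (hpm : p ≤ m + 1) :
    biWeight m a b (i.castLE hpm) = a i := by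
  have hi : p ≤ m - i := by omega
  simp [biWeight, pad_val, pad_of_le b hi]

lemma biWeight_of_le (a b : Fin p → ℤ) {i : Fin (m + 1)} (hi : p ≤ i) :
    biWeight m a b i = -pad b (m - i) := by
  simp [biWeight, pad_of_le a hi]

lemma biAlt_mem_dotAlternating (hp : 2 * p ≤ m + 1) (b : Fin p → ℤ) :
    (biAlt m · b) ∈ dotAlternating p (CharRing (m + 1)) := fun a i j hij => by
  have hpm : p ≤ m + 1 := by omega
  have hswap : biWeight m (dotSwap i j a) b + rhoA m =
      (biWeight m a b + rhoA m) ∘ Equiv.swap (i.castLE hpm) (j.castLE hpm) := by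
    ext x
    simp only [Pi.add_apply, Function.comp_apply]
    by_cases hx : (x : ℕ) < p
    · obtain ⟨y, rfl⟩ : ∃ y : Fin p, y.castLE hpm = x := ⟨⟨x, hx⟩, rfl⟩
      rw [(Fin.castLE_injective hpm).swap_apply, biWeight_castLE hp, biWeight_castLE hp]
      simp only [dotSwap, rhoA, Fin.val_castLE]
      push_cast
      ring
    · have hne : ∀ l : Fin p, x ≠ l.castLE hpm := fun l hl => hx (by simp [hl])
      rw [Equiv.swap_apply_of_ne_of_ne (hne i) (hne j), biWeight_of_le _ _ (not_lt.1 hx),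
        biWeight_of_le _ _ (not_lt.1 hx)]
  simp only [biAlt]
  rw [hswap, altA_comp_swap _ ((Fin.castLE_injective hpm).ne hij)]

lemma hasWall_biAlt (hp : 2 * p ≤ m + 1) {k : ℕ} (hkp : k ≤ p) {b : Fin p → ℤ}
    (hb : ∀ i : Fin p, p ≤ i + k → b i = 0) : HasWall k (biAlt m · b) := fun a i hlt hle => by
  have hpm : p ≤ m + 1 := by omega
  obtain ⟨j, hj⟩ : ∃ j : ℕ, (j : ℤ) = i - a i := ⟨(i - a i).toNat, by omega⟩
  have hne : i.castLE hpm ≠ ⟨j, by omega⟩ := by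
    simp only [ne_eq, Fin.ext_iff, Fin.val_castLE]
    omega
  refine altA_eq_zero hne ?_
  have hjq : (j : ℚ) = i - a i := by exact_mod_cast hj
  rw [Pi.add_apply, Pi.add_apply, biWeight_castLE hp, biWeight_of_le a b (by simp only; omega),
    pad_eq_zero hb (by simp only; omega)]
  simp only [rhoA, Fin.val_castLE, hjq]
  push_cast
  ring

lemma biWeight_add_single_left (a b : Fin p → ℤ) (i : Fin p) (k : ℤ) (hpm : p ≤ m + 1) :
    biWeight m (a + Pi.single i k) b = biWeight m a b + Pi.single (i.castLE hpm) (k : ℚ) := by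
  ext x
  simp only [biWeight, pad_add, pad_single, Pi.add_apply, Pi.single_apply, Fin.ext_iff,
    Fin.val_castLE]
  push_cast
  ring

lemma biWeight_add_single_right (a b : Fin p → ℤ) (i : Fin p) (k : ℤ) (hpm : p ≤ m + 1) :
    biWeight m a (b + Pi.single i k) =
      biWeight m a b + Pi.single (i.castLE hpm).rev (-k : ℚ) := by
  ext x
  have hx : m - (x : ℕ) = i ↔ x = (i.castLE hpm).rev := by
    simp only [Fin.ext_iff, Fin.val_rev, Fin.val_castLE]
    omega
  simp only [biWeight, pad_add, pad_single, Pi.add_apply, Pi.single_apply, hx]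
  split_ifs <;> push_cast <;> ring

lemma biAlt_mul_powerSum (hp : 2 * p ≤ m + 1) {k : ℕ} (hk : k ≠ 0) (hkp : k ≤ p) {a : Fin p → ℤ}
    (ha : ∀ i : Fin p, p ≤ i + k → a i = 0) (b : Fin p → ℤ) :
    biAlt m a b * powerSum m k = shiftSum k (biAlt m · b) a + shiftSum (-k) (biAlt m a) b := by
  have hpm : p ≤ m + 1 := by omega
  let ι : Fin p ⊕ Fin p → Fin (m + 1) := Sum.elim (Fin.castLE hpm) fun i => (i.castLE hpm).rev
  have hι : Function.Injective ι := by
    rintro (i | i) (j | j) hij <;>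
      simp only [ι, Sum.elim_inl, Sum.elim_inr, Fin.ext_iff, Fin.val_rev, Fin.val_castLE,
        Sum.inl.injEq, Sum.inr.injEq] at hij ⊢ <;> omega
  rw [shiftSum_apply, shiftSum_apply, ← Fintype.sum_sumElim, biAlt, altA_mul_powerSum]
  refine (Fintype.sum_of_injective ι hι _ _ (fun x hx => ?_) ?_).symm
  · have hxp : p ≤ x := by
      by_contra! h
      exact hx ⟨.inl ⟨x, h⟩, rfl⟩
    have hxm : p ≤ m - x := by
      by_contra! h
      exact hx ⟨.inr ⟨m - x, h⟩, by simp [ι, Fin.ext_iff, Fin.val_rev]; omega⟩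
    -- the middle slot `x` is raised onto slot `x - k`, which is still empty
    have hne : x ≠ ⟨x - k, by omega⟩ := by simp only [ne_eq, Fin.ext_iff]; omega
    refine altA_eq_zero hne ?_
    have hx₁ : biWeight m a b x = 0 := by
      simp [biWeight, pad_of_le a hxp, pad_of_le b hxm]
    have hx₂ : biWeight m a b ⟨x - k, by omega⟩ = 0 := by
      simp [biWeight, pad_eq_zero ha (i := x - k) (by omega),
        pad_of_le b (i := m - (x - k)) (by omega)]
    simp only [Pi.add_apply, hx₁, hx₂, Pi.single_eq_same, Pi.single_eq_of_ne hne.symm, rhoA]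
    push_cast [show k ≤ (x : ℕ) by omega]
    ring
  · rintro (i | i)
    · simp [ι, biAlt, biWeight_add_single_left a b i k hpm, add_right_comm]
    · simp [ι, biAlt, biWeight_add_single_right a b i (-k) hpm, add_right_comm]

lemma biAlt_flip_mem_dotAlternating (hp : 2 * p ≤ m + 1) (a : Fin p → ℤ) :
    biAlt m a ∈ dotAlternating p (CharRing (m + 1)) := fun b i j hij => by
  obtain ⟨c, hc⟩ := exists_biAlt_swap m p
  have h : biAlt m (dotSwap i j b) a = -biAlt m b a := biAlt_mem_dotAlternating hp a b i j hij
  rw [hc (dotSwap i j b), h, map_neg, mul_neg, ← hc]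

lemma hasWall_biAlt_flip (hp : 2 * p ≤ m + 1) {k : ℕ} (hkp : k ≤ p) {a : Fin p → ℤ}
    (ha : ∀ i : Fin p, p ≤ i + k → a i = 0) : HasWall k (biAlt m a) := fun b i hlt hle => by
  obtain ⟨c, hc⟩ := exists_biAlt_swap m p
  have h : biAlt m b a = 0 := hasWall_biAlt hp hkp ha b i hlt hle
  rw [hc, h, map_zero, mul_zero]

lemma biAlt_mul_powerSum_neg (hp : 2 * p ≤ m + 1) {k : ℕ} (hk : k ≠ 0) (hkp : k ≤ p)
    (a : Fin p → ℤ) {b : Fin p → ℤ} (hb : ∀ i : Fin p, p ≤ i + k → b i = 0) :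
    biAlt m a b * powerSum m (-k) = shiftSum k (biAlt m a) b + shiftSum (-k) (biAlt m · b) a := by
  obtain ⟨c, hc⟩ := exists_biAlt_swap m p
  have hdual : powerSum m (-k) = dilate (-1) (powerSum m k) := by
    rw [dilate_powerSum, neg_one_mul]
  rw [hc b a, hdual, mul_assoc, ← map_mul, biAlt_mul_powerSum hp hk hkp hb a]
  simp only [shiftSum_apply, map_add, map_sum, mul_add, Finset.mul_sum, ← hc]

end TwoSided

section NormalOrdering

variable {p m : ℕ}

/-- `A_ρ` times the normally ordered product of the power sums `p_k` for `k ∈ α` and `p_{-k}` for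
`k ∈ β`: the product in which no box of `a` is cancelled against a box of `b`. -/
def normalOrdered (p m : ℕ) (α β : List ℕ) : CharRing (m + 1) :=
  evalPowerSums β (evalPowerSums α (biAlt (p := p) m))

lemma normalOrdered_nil_nil (p m : ℕ) : normalOrdered p m [] [] = altA m (rhoA m) :=
  biAlt_zero_zero m

lemma evalPowerSums_biAlt_apply (α : List ℕ) (b : Fin p → ℤ) :
    evalPowerSums α (biAlt m) b = evalPowerSums α (biAlt m · b) :=
  map_evalPowerSums (Pi.evalAddMonoidHom _ b) α (biAlt m)

lemma evalPowerSums_biAlt_mem (hp : 2 * p ≤ m + 1) (α : List ℕ) :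
    evalPowerSums α (biAlt m) ∈ dotAlternating p (CharRing (m + 1)) :=
  evalPowerSums_mem _ α (biAlt_flip_mem_dotAlternating hp)

lemma normalOrdered_nil_mul_powerSum (hp : 2 * p ≤ m + 1) {k : ℕ} (hk : k ≠ 0) {α : List ℕ}
    (hα : α.sum + k ≤ p) :
    normalOrdered p m α [] * powerSum m k = normalOrdered p m (k :: α) [] := by
  have hφ := biAlt_mem_dotAlternating hp (0 : Fin p → ℤ)
  rw [normalOrdered, normalOrdered, evalPowerSums_nil, evalPowerSums_nil,
    evalPowerSums_biAlt_apply, evalPowerSums_biAlt_apply, ← AddMonoidHom.mulRight_apply,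
    map_evalPowerSums, evalPowerSums_cons]
  refine evalPowerSums_congr (comp_mem_dotAlternating _ hφ) (shiftSum_mem_dotAlternating k hφ) α hα
    fun a ha => ?_
  rw [Function.comp_apply, AddMonoidHom.mulRight_apply, biAlt_mul_powerSum hp hk (by omega) ha,
    shiftSum_neg_zero (biAlt_flip_mem_dotAlternating hp a) hk
      (hasWall_biAlt_flip hp (by omega) ha), add_zero]

lemma normalOrdered_mul_powerSum_neg (hp : 2 * p ≤ m + 1) {k : ℕ} (hk : k ≠ 0) {α β α' : List ℕ}
    {c : ℕ} (hβ : β.sum + k ≤ p)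
    (hα : ∀ {φ : (Fin p → ℤ) → CharRing (m + 1)}, φ ∈ dotAlternating p _ → HasWall k φ →
      evalPowerSums α (shiftSum (-k) φ) = c • evalPowerSums α' φ) :
    normalOrdered p m α β * powerSum m (-k) =
      normalOrdered p m α (k :: β) + c • normalOrdered p m α' β := by
  have hmem := evalPowerSums_biAlt_mem (m := m) hp
  rw [normalOrdered, normalOrdered, normalOrdered, ← AddMonoidHom.mulRight_apply,
    map_evalPowerSums, evalPowerSums_cons, ← map_nsmul, ← map_add]
  refine evalPowerSums_congr (comp_mem_dotAlternating _ (hmem α))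
    (add_mem (shiftSum_mem_dotAlternating k (hmem α)) (nsmul_mem (hmem α') c)) β hβ fun b hb => ?_
  have hφ := biAlt_mem_dotAlternating hp b
  calc evalPowerSums α (biAlt m) b * powerSum m (-k)
    _ = evalPowerSums α (fun a => biAlt m a b * powerSum m (-k)) := by
        rw [evalPowerSums_biAlt_apply, ← AddMonoidHom.mulRight_apply, map_evalPowerSums]
        rfl
    _ = evalPowerSums α (fun a => shiftSum k (biAlt m a) b) +
          evalPowerSums α (shiftSum (-k) (biAlt m · b)) := by
        rw [← map_add]
        congr 1
        ext1 a
        exact biAlt_mul_powerSum_neg hp hk (by omega) a hb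
    _ = shiftSum k (evalPowerSums α (biAlt m)) b + c • evalPowerSums α' (biAlt m) b := by
        rw [hα hφ (hasWall_biAlt hp (by omega) hb), evalPowerSums_biAlt_apply α' b]
        congr 1
        let shiftAt : ((Fin p → ℤ) → CharRing (m + 1)) →+ CharRing (m + 1) :=
          (Pi.evalAddMonoidHom _ b).comp (shiftSum (k : ℤ))
        exact (map_evalPowerSums shiftAt α (biAlt m)).symm

end NormalOrdering

section Products

variable {m : ℕ}

lemma altA_rhoA_mul_prod_powerSum {p : ℕ} (hp : 2 * p ≤ m + 1) {α : List ℕ} (hα : α.sum ≤ p)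
    (h0 : 0 ∉ α) :
    altA m (rhoA m) * (α.map fun k : ℕ => powerSum m k).prod = normalOrdered p m α [] := by
  induction α with
  | nil => rw [List.map_nil, List.prod_nil, mul_one, normalOrdered_nil_nil]
  | cons k α ih =>
    rw [List.sum_cons] at hα
    rw [List.mem_cons, not_or] at h0
    rw [List.map_cons, List.prod_cons, mul_left_comm, mul_comm, ih (by omega) h0.2,
      normalOrdered_nil_mul_powerSum hp (Ne.symm h0.1) (by omega)]

lemma normalOrdered_one_mul_powerSum_neg_one (hm : 5 ≤ m) {β : List ℕ} (hβ : β.sum + 1 ≤ 3) :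
    normalOrdered 3 m [1] β * powerSum m (-1) =
      normalOrdered 3 m [1] (1 :: β) + normalOrdered 3 m [] β := by
  simpa using normalOrdered_mul_powerSum_neg (m := m) (by omega) one_ne_zero hβ
    evalPowerSums_one_shiftSum_neg_one

lemma normalOrdered_one_one_mul_powerSum_neg_one (hm : 5 ≤ m) {β : List ℕ} (hβ : β.sum + 1 ≤ 3) :
    normalOrdered 3 m [1, 1] β * powerSum m (-1) =
      normalOrdered 3 m [1, 1] (1 :: β) + 2 • normalOrdered 3 m [1] β := by
  simpa using normalOrdered_mul_powerSum_neg (m := m) (by omega) one_ne_zero hβ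
    evalPowerSums_one_one_shiftSum_neg_one

lemma normalOrdered_one_one_one_mul_powerSum_neg_one (hm : 5 ≤ m)
    {β : List ℕ} (hβ : β.sum + 1 ≤ 3) :
    normalOrdered 3 m [1, 1, 1] β * powerSum m (-1) =
      normalOrdered 3 m [1, 1, 1] (1 :: β) + 3 • normalOrdered 3 m [1, 1] β := by
  simpa using normalOrdered_mul_powerSum_neg (m := m) (by omega) one_ne_zero hβ
    evalPowerSums_one_one_one_shiftSum_neg_one

lemma normalOrdered_two_one_mul_powerSum_neg_one (hm : 5 ≤ m) {β : List ℕ} (hβ : β.sum + 1 ≤ 3) :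
    normalOrdered 3 m [2, 1] β * powerSum m (-1) =
      normalOrdered 3 m [2, 1] (1 :: β) + normalOrdered 3 m [2] β := by
  simpa using normalOrdered_mul_powerSum_neg (m := m) (by omega) one_ne_zero hβ
    evalPowerSums_two_one_shiftSum_neg_one

lemma normalOrdered_two_mul_powerSum_neg_two (hm : 5 ≤ m) {β : List ℕ} (hβ : β.sum + 2 ≤ 3) :
    normalOrdered 3 m [2] β * powerSum m (-2) =
      normalOrdered 3 m [2] (2 :: β) + 2 • normalOrdered 3 m [] β := by
  simpa using normalOrdered_mul_powerSum_neg (m := m) (by omega) two_ne_zero hβ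
    evalPowerSums_two_shiftSum_neg_two

lemma normalOrdered_two_one_mul_powerSum_neg_two (hm : 5 ≤ m) {β : List ℕ} (hβ : β.sum + 2 ≤ 3) :
    normalOrdered 3 m [2, 1] β * powerSum m (-2) =
      normalOrdered 3 m [2, 1] (2 :: β) + 2 • normalOrdered 3 m [1] β := by
  simpa using normalOrdered_mul_powerSum_neg (m := m) (by omega) two_ne_zero hβ
    evalPowerSums_two_one_shiftSum_neg_two

lemma normalOrdered_three_mul_powerSum_neg_three (hm : 5 ≤ m) {β : List ℕ} (hβ : β.sum + 3 ≤ 3) :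
    normalOrdered 3 m [3] β * powerSum m (-3) =
      normalOrdered 3 m [3] (3 :: β) + 3 • normalOrdered 3 m [] β := by
  simpa using normalOrdered_mul_powerSum_neg (m := m) (by omega) three_ne_zero hβ
    evalPowerSums_three_shiftSum_neg_three

lemma altA_rhoA_mul_powerSums_one (hm : 5 ≤ m) :
    altA m (rhoA m) * (powerSum m 1 * powerSum m (-1)) =
      normalOrdered 3 m [1] [1] + altA m (rhoA m) := by
  have hcreate : altA m (rhoA m) * powerSum m 1 = normalOrdered 3 m [1] [] := by
    simpa using altA_rhoA_mul_prod_powerSum (m := m) (α := [1]) (by omega) (by simp) (by simp)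
  have h := normalOrdered_one_mul_powerSum_neg_one hm (β := []) (by simp)
  rw [normalOrdered_nil_nil] at h
  linear_combination powerSum m (-1) * hcreate + h

lemma altA_rhoA_mul_powerSums_one_one (hm : 5 ≤ m) :
    altA m (rhoA m) * (powerSum m 1 ^ 2 * powerSum m (-1) ^ 2) =
      normalOrdered 3 m [1, 1] [1, 1] + 4 * normalOrdered 3 m [1] [1] + 2 * altA m (rhoA m) := by
  have hcreate : altA m (rhoA m) * (powerSum m 1 * powerSum m 1) = normalOrdered 3 m [1, 1] [] := by
    simpa using altA_rhoA_mul_prod_powerSum (m := m) (α := [1, 1]) (by omega) (by simp) (by simp)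
  have h₁ := normalOrdered_one_one_mul_powerSum_neg_one hm (β := []) (by simp)
  have h₂ := normalOrdered_one_one_mul_powerSum_neg_one hm (β := [1]) (by simp)
  have h₃ := normalOrdered_one_mul_powerSum_neg_one hm (β := []) (by simp)
  rw [normalOrdered_nil_nil] at h₃
  linear_combination powerSum m (-1) ^ 2 * hcreate + powerSum m (-1) * h₁ + h₂ + 2 * h₃

lemma altA_rhoA_mul_powerSums_one_one_one (hm : 5 ≤ m) :
    altA m (rhoA m) * (powerSum m 1 ^ 3 * powerSum m (-1) ^ 3) =
      normalOrdered 3 m [1, 1, 1] [1, 1, 1] + 9 * normalOrdered 3 m [1, 1] [1, 1] +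
        18 * normalOrdered 3 m [1] [1] + 6 * altA m (rhoA m) := by
  have hcreate : altA m (rhoA m) * (powerSum m 1 * (powerSum m 1 * powerSum m 1)) =
      normalOrdered 3 m [1, 1, 1] [] := by
    simpa using altA_rhoA_mul_prod_powerSum (m := m) (α := [1, 1, 1]) (by omega) (by simp) (by simp)
  have h₁ := normalOrdered_one_one_one_mul_powerSum_neg_one hm (β := []) (by simp)
  have h₂ := normalOrdered_one_one_one_mul_powerSum_neg_one hm (β := [1]) (by simp)
  have h₃ := normalOrdered_one_one_one_mul_powerSum_neg_one hm (β := [1, 1]) (by simp)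
  have h₄ := normalOrdered_one_one_mul_powerSum_neg_one hm (β := []) (by simp)
  have h₅ := normalOrdered_one_one_mul_powerSum_neg_one hm (β := [1]) (by simp)
  have h₆ := normalOrdered_one_mul_powerSum_neg_one hm (β := []) (by simp)
  rw [normalOrdered_nil_nil] at h₆
  linear_combination powerSum m (-1) ^ 3 * hcreate + powerSum m (-1) ^ 2 * h₁ +
    powerSum m (-1) * h₂ + h₃ + 3 * powerSum m (-1) * h₄ + 6 * h₅ + 6 * h₆

lemma altA_rhoA_mul_powerSums_two (hm : 5 ≤ m) :
    altA m (rhoA m) * (powerSum m 2 * powerSum m (-2)) =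
      normalOrdered 3 m [2] [2] + 2 * altA m (rhoA m) := by
  have hcreate : altA m (rhoA m) * powerSum m 2 = normalOrdered 3 m [2] [] := by
    simpa using altA_rhoA_mul_prod_powerSum (m := m) (α := [2]) (by omega) (by simp) (by simp)
  have h := normalOrdered_two_mul_powerSum_neg_two hm (β := []) (by simp)
  rw [normalOrdered_nil_nil] at h
  linear_combination powerSum m (-2) * hcreate + h

lemma altA_rhoA_mul_powerSums_two_one (hm : 5 ≤ m) :
    altA m (rhoA m) * (powerSum m 2 * powerSum m 1 * (powerSum m (-1) * powerSum m (-2))) =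
      normalOrdered 3 m [2, 1] [2, 1] + 2 * normalOrdered 3 m [1] [1] +
        normalOrdered 3 m [2] [2] + 2 * altA m (rhoA m) := by
  have hcreate : altA m (rhoA m) * (powerSum m 2 * powerSum m 1) = normalOrdered 3 m [2, 1] [] := by
    simpa using altA_rhoA_mul_prod_powerSum (m := m) (α := [2, 1]) (by omega) (by simp) (by simp)
  have h₁ := normalOrdered_two_one_mul_powerSum_neg_one hm (β := []) (by simp)
  have h₂ := normalOrdered_two_one_mul_powerSum_neg_two hm (β := [1]) (by simp)
  have h₃ := normalOrdered_two_mul_powerSum_neg_two hm (β := []) (by simp)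
  rw [normalOrdered_nil_nil] at h₃
  linear_combination powerSum m (-1) * powerSum m (-2) * hcreate + powerSum m (-2) * h₁ + h₂ + h₃

lemma altA_rhoA_mul_powerSums_three (hm : 5 ≤ m) :
    altA m (rhoA m) * (powerSum m 3 * powerSum m (-3)) =
      normalOrdered 3 m [3] [3] + 3 * altA m (rhoA m) := by
  have hcreate : altA m (rhoA m) * powerSum m 3 = normalOrdered 3 m [3] [] := by
    simpa using altA_rhoA_mul_prod_powerSum (m := m) (α := [3]) (by omega) (by simp) (by simp)
  have h := normalOrdered_three_mul_powerSum_neg_three hm (β := []) (by simp)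
  rw [normalOrdered_nil_nil] at h
  linear_combination powerSum m (-3) * hcreate + h

end Products

section Frobenius

variable {m : ℕ}

lemma biAlt_mem_dotAlternating_fun {p : ℕ} (hp : 2 * p ≤ m + 1) :
    biAlt m ∈ dotAlternating p ((Fin p → ℤ) → CharRing (m + 1)) := fun a i j hij => by
  ext1 b
  exact biAlt_mem_dotAlternating hp b a i j hij

lemma normalOrdered_degree_one (hm : 5 ≤ m) :
    normalOrdered 3 m [1] [1] = biAlt m ![1, 0, 0] ![1, 0, 0] := by
  have h : 2 * 3 ≤ m + 1 := by omega
  rw [normalOrdered, evalPowerSums_one (biAlt_mem_dotAlternating_fun h),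
    evalPowerSums_one (biAlt_flip_mem_dotAlternating h _)]

lemma normalOrdered_degree_two (hm : 5 ≤ m) :
    normalOrdered 3 m [1, 1] [1, 1] =
      biAlt m ![2, 0, 0] ![2, 0, 0] + biAlt m ![2, 0, 0] ![1, 1, 0] +
        biAlt m ![1, 1, 0] ![2, 0, 0] + biAlt m ![1, 1, 0] ![1, 1, 0] := by
  have h : 2 * 3 ≤ m + 1 := by omega
  rw [normalOrdered, evalPowerSums_one_one (biAlt_mem_dotAlternating_fun h), map_add,
    evalPowerSums_one_one (biAlt_flip_mem_dotAlternating h _),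
    evalPowerSums_one_one (biAlt_flip_mem_dotAlternating h _)]
  abel

/-- The terms other than `6 s_{ν, ν}` cancel by the orthogonality of the characters of `S₃`. -/
lemma normalOrdered_degree_three (hm : 5 ≤ m) :
    normalOrdered 3 m [1, 1, 1] [1, 1, 1] + 3 • normalOrdered 3 m [2, 1] [2, 1] +
        2 • normalOrdered 3 m [3] [3] =
      6 • (biAlt m ![3, 0, 0] ![3, 0, 0] + biAlt m ![2, 1, 0] ![2, 1, 0] +
        biAlt m ![1, 1, 1] ![1, 1, 1]) := by
  have h : 2 * 3 ≤ m + 1 := by omega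
  have h₁ := biAlt_mem_dotAlternating_fun h
  have h₂ := biAlt_flip_mem_dotAlternating h
  simp only [normalOrdered, evalPowerSums_one_one_one h₁, evalPowerSums_two_one h₁,
    evalPowerSums_three h₁, map_add, map_sub, map_nsmul]
  simp only [evalPowerSums_one_one_one (h₂ _), evalPowerSums_two_one (h₂ _),
    evalPowerSums_three (h₂ _)]
  abel

lemma altA_rhoA_mul_symCube (hm : 5 ≤ m) :
    altA m (rhoA m) * ((powerSum m 1 * powerSum m (-1) - 1) ^ 3 +
        3 * ((powerSum m 1 * powerSum m (-1) - 1) * (powerSum m 2 * powerSum m (-2) - 1)) +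
        2 * (powerSum m 3 * powerSum m (-3) - 1)) =
      6 * (biAlt m ![3, 0, 0] ![3, 0, 0] + biAlt m ![2, 0, 0] ![2, 0, 0] +
        2 * biAlt m ![1, 0, 0] ![1, 0, 0] + biAlt m ![1, 1, 0] ![1, 1, 0] +
        biAlt m ![1, 1, 1] ![1, 1, 1] + biAlt m ![2, 1, 0] ![2, 1, 0] +
        biAlt m ![2, 0, 0] ![1, 1, 0] + biAlt m ![1, 1, 0] ![2, 0, 0] + altA m (rhoA m)) := by
  linear_combination altA_rhoA_mul_powerSums_one_one_one hm +
    3 * altA_rhoA_mul_powerSums_two_one hm + 2 * altA_rhoA_mul_powerSums_three hm -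
    3 * altA_rhoA_mul_powerSums_one_one hm - 3 * altA_rhoA_mul_powerSums_two hm +
    normalOrdered_degree_three hm + 6 * normalOrdered_degree_two hm +
    12 * normalOrdered_degree_one hm

end Frobenius

section FundamentalWeights

variable {r : ℕ}

lemma slWt_zero (r : ℕ) : slWt r 0 = 0 := by
  ext i
  simp [slWt, partLift]

lemma slWt_add (d d' : Fin r → ℕ) : slWt r (d + d') = slWt r d + slWt r d' := by
  ext i
  simp only [slWt, partLift, Pi.add_apply, Nat.cast_add, Finset.sum_add_distrib, mul_add]
  ring

lemma slWt_nsmul (n : ℕ) (d : Fin r → ℕ) : slWt r (n • d) = n • slWt r d :=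
  map_nsmul (AddMonoidHom.mk' (slWt r) slWt_add) n d

lemma e_eq_single {k : ℕ} (hk : k < r) : e r (k + 1) = Pi.single ⟨k, hk⟩ 1 := by
  ext i
  simp [e, Pi.single_apply, Fin.ext_iff]

lemma slWt_e {k : ℕ} (hk : k ≠ 0) (hkr : k ≤ r) (i : Fin (r + 1)) :
    slWt r (e r k) i = (if (i : ℕ) < k then 1 else 0) - k / (r + 1) := by
  obtain ⟨k, rfl⟩ := Nat.exists_eq_succ_of_ne_zero hk
  simp [slWt, partLift, e_eq_single (Nat.lt_of_succ_le hkr), Pi.single_apply]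

variable {m : ℕ}

lemma pad_vec_three (a b c : ℤ) (i : ℕ) :
    (pad ![a, b, c] i : ℚ) = (a - b) * (if i < 1 then 1 else 0) +
      (b - c) * (if i < 2 then 1 else 0) + c * (if i < 3 then 1 else 0) := by
  match i with
  | 0 | 1 | 2 => simp [pad]
  | n + 3 => simp [pad]

lemma slWt_eq_biWeight (hm : 5 ≤ m) (x₁ x₂ x₃ y₁ y₂ y₃ : ℕ)
    (h : x₁ + 2 * x₂ + 3 * x₃ = y₁ + 2 * y₂ + 3 * y₃) :
    slWt m (x₁ • e m 1 + x₂ • e m 2 + x₃ • e m 3 + y₃ • e m (m - 2) + y₂ • e m (m - 1) +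
        y₁ • e m m) =
      biWeight m ![(x₁ + x₂ + x₃ : ℤ), x₂ + x₃, x₃] ![(y₁ + y₂ + y₃ : ℤ), y₂ + y₃, y₃] := by
  ext i
  have hrev (k : ℕ) :
      (if m - i < k then 1 else 0 : ℚ) = 1 - if (i : ℕ) < m + 1 - k then 1 else 0 := by
    split_ifs <;> first | omega | norm_num
  have hcast : (x₁ + 2 * x₂ + 3 * x₃ : ℚ) = y₁ + 2 * y₂ + 3 * y₃ := by exact_mod_cast h
  have hm₀ : (m + 1 : ℚ) ≠ 0 := by positivity
  simp only [slWt_add, slWt_nsmul, Pi.add_apply, Pi.smul_apply, biWeight, pad_vec_three, hrev]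
  simp (disch := omega) only [slWt_e, nsmul_eq_mul, Nat.cast_sub, add_tsub_cancel_right,
    show m + 1 - 2 = m - 1 by omega, show m + 1 - 3 = m - 2 by omega]
  push_cast
  field_simp
  linear_combination (-1 : ℚ) * hcast

end FundamentalWeights

section Uniqueness

variable {r : ℕ}

lemma coeff_altA {v w : Fin (r + 1) → ℚ} (hv : StrictAnti v) (hw : StrictAnti w) :
    (altA r v).coeff w = if v = w then 1 else 0 := by
  have hperm (σ : Equiv.Perm (Fin (r + 1))) (hσ : (fun i => v (σ i)) = w) : σ = 1 := by
    have hmono : StrictMono σ := fun i j hij => by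
      have hlt := hw hij
      rw [← hσ] at hlt
      exact hv.lt_iff_gt.1 hlt
    exact DFunLike.coe_injective <| (StrictMono.range_inj hmono strictMono_id).1 (by simp)
  simp only [altA, mono, AddMonoidAlgebra.coeff_sum, Finsupp.finsetSum_apply,
    AddMonoidAlgebra.coeff_smul, Finsupp.smul_apply, AddMonoidAlgebra.coeff_single,
    Finsupp.single_apply]
  rw [Finset.sum_eq_single_of_mem 1 (Finset.mem_univ _) fun σ _ hσ => by
    rw [if_neg (mt (hperm σ) hσ), smul_zero]]
  rw [Equiv.Perm.sign_one, Units.val_one, one_smul]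
  rfl

lemma rhoA_strictAnti (r : ℕ) : StrictAnti (rhoA r) := fun i j hij => by
  simpa [rhoA] using hij

lemma partLift_antitone (d : Fin r → ℕ) : Antitone (partLift r d) := fun i j hij =>
  Finset.sum_le_sum_of_subset_of_nonneg
    (Finset.monotone_filter_right _ fun _ _ hk => (Fin.le_def.1 hij).trans hk)
    fun _ _ _ => by positivity

lemma slWt_add_rhoA_strictAnti (d : Fin r → ℕ) : StrictAnti (slWt r d + rhoA r) :=
  Antitone.add_strictAnti (fun _ _ hij => sub_le_sub_right (partLift_antitone d hij) _)
    (rhoA_strictAnti r)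

lemma partLift_castSucc (d : Fin r → ℕ) (j : Fin r) :
    partLift r d j.castSucc = d j + partLift r d j.succ := by
  have hfilter : Finset.univ.filter (fun k : Fin r => (j.castSucc : ℕ) ≤ k) =
      insert j (Finset.univ.filter fun k : Fin r => (j.succ : ℕ) ≤ k) := by
    ext k
    simp only [Finset.mem_filter, Finset.mem_univ, true_and, Finset.mem_insert, Fin.ext_iff,
      Fin.val_castSucc, Fin.val_succ]
    omega
  rw [partLift, partLift, hfilter, Finset.sum_insert (by simp)]

lemma slWt_injective (r : ℕ) : Function.Injective (slWt r) := fun d d' h => by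
  ext j
  have h₁ := congrFun h j.castSucc
  have h₂ := congrFun h j.succ
  simp only [slWt, partLift_castSucc] at h₁ h₂
  exact_mod_cast show (d j : ℚ) = d' j by linarith

lemma coeff_mul_altA_of_decomp {F : CharRing (r + 1)} {c : (Fin r → ℕ) →₀ ℕ} (h : Decomp r F c)
    (μ : Fin r → ℕ) : (F * altA r (rhoA r)).coeff (slWt r μ + rhoA r) = c μ := by
  rw [h]
  simp only [Finsupp.sum, AddMonoidAlgebra.coeff_sum, Finsupp.finsetSum_apply,
    AddMonoidAlgebra.coeff_smul, Finsupp.smul_apply,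
    coeff_altA (slWt_add_rhoA_strictAnti _) (slWt_add_rhoA_strictAnti _), add_left_inj,
    (slWt_injective r).eq_iff]
  simp +contextual [eq_comm]

lemma decomp_unique {F : CharRing (r + 1)} {c c' : (Fin r → ℕ) →₀ ℕ} (h : Decomp r F c)
    (h' : Decomp r F c') : c = c' := by
  ext μ
  have hμ := coeff_mul_altA_of_decomp h μ
  rw [coeff_mul_altA_of_decomp h'] at hμ
  exact_mod_cast hμ.symm

lemma altA_rhoA_ne_zero (r : ℕ) : altA r (rhoA r) ≠ 0 := fun h => by
  simpa [h] using coeff_altA (rhoA_strictAnti r) (rhoA_strictAnti r)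

lemma isCharA_unique {d : Fin r → ℕ} {f f' : CharRing (r + 1)} (h : IsCharA r d f)
    (h' : IsCharA r d f') : f = f' :=
  mul_left_cancel₀ (altA_rhoA_ne_zero r) (h.trans h'.symm)

end Uniqueness

section SymCube

variable {m : ℕ}

lemma isCharA_adjoint (hm : 5 ≤ m) :
    IsCharA m (e m 1 + e m m) (powerSum m 1 * powerSum m (-1) - 1) := by
  have hadj : slWt m (e m 1 + e m m) = biWeight m ![1, 0, 0] ![1, 0, 0] := by
    simpa using slWt_eq_biWeight hm 1 0 0 1 0 0 rfl
  rw [IsCharA, hadj, mul_sub, mul_one, altA_rhoA_mul_powerSums_one hm, normalOrdered_degree_one hm,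
    add_sub_cancel_right, biAlt]

lemma decomp_iff_liftAddHom {r : ℕ} {F : CharRing (r + 1)} {c : (Fin r → ℕ) →₀ ℕ} :
    Decomp r F c ↔ F * altA r (rhoA r) =
      Finsupp.liftAddHom (fun μ => multiplesHom _ (altA r (slWt r μ + rhoA r))) c := by
  simp only [Decomp, Finsupp.liftAddHom_apply, Finsupp.sum, multiplesHom_apply, natCast_zsmul]

/-- The multiplicities of the irreducible constituents, indexed by highest weight, of the
symmetric cube of the adjoint module of `A_m`. -/
def symCubeMult (m : ℕ) : (Fin m → ℕ) →₀ ℕ :=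
  Finsupp.single (3 • e m 1 + 3 • e m m) 1
    + Finsupp.single (2 • e m 1 + 2 • e m m) 1
    + Finsupp.single (e m 1 + e m m) 2
    + Finsupp.single (e m 2 + e m (m - 1)) 1
    + Finsupp.single (e m 3 + e m (m - 2)) 1
    + Finsupp.single (e m 1 + e m 2 + e m (m - 1) + e m m) 1
    + Finsupp.single (2 • e m 1 + e m (m - 1)) 1
    + Finsupp.single (e m 2 + 2 • e m m) 1
    + Finsupp.single 0 1

lemma liftAddHom_symCubeMult (hm : 5 ≤ m) :
    Finsupp.liftAddHom (fun μ => multiplesHom _ (altA m (slWt m μ + rhoA m))) (symCubeMult m) =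
      biAlt m ![3, 0, 0] ![3, 0, 0] + biAlt m ![2, 0, 0] ![2, 0, 0]
        + 2 • biAlt m ![1, 0, 0] ![1, 0, 0] + biAlt m ![1, 1, 0] ![1, 1, 0]
        + biAlt m ![1, 1, 1] ![1, 1, 1] + biAlt m ![2, 1, 0] ![2, 1, 0]
        + biAlt m ![2, 0, 0] ![1, 1, 0] + biAlt m ![1, 1, 0] ![2, 0, 0] + altA m (rhoA m) := by
  have h₁ : slWt m (3 • e m 1 + 3 • e m m) = biWeight m ![3, 0, 0] ![3, 0, 0] := by
    simpa using slWt_eq_biWeight hm 3 0 0 3 0 0 rfl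
  have h₂ : slWt m (2 • e m 1 + 2 • e m m) = biWeight m ![2, 0, 0] ![2, 0, 0] := by
    simpa using slWt_eq_biWeight hm 2 0 0 2 0 0 rfl
  have h₃ : slWt m (e m 1 + e m m) = biWeight m ![1, 0, 0] ![1, 0, 0] := by
    simpa using slWt_eq_biWeight hm 1 0 0 1 0 0 rfl
  have h₄ : slWt m (e m 2 + e m (m - 1)) = biWeight m ![1, 1, 0] ![1, 1, 0] := by
    simpa using slWt_eq_biWeight hm 0 1 0 0 1 0 rfl
  have h₅ : slWt m (e m 3 + e m (m - 2)) = biWeight m ![1, 1, 1] ![1, 1, 1] := by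
    simpa using slWt_eq_biWeight hm 0 0 1 0 0 1 rfl
  have h₆ : slWt m (e m 1 + e m 2 + e m (m - 1) + e m m) =
      biWeight m ![2, 1, 0] ![2, 1, 0] := by
    simpa using slWt_eq_biWeight hm 1 1 0 1 1 0 rfl
  have h₇ : slWt m (2 • e m 1 + e m (m - 1)) = biWeight m ![2, 0, 0] ![1, 1, 0] := by
    simpa using slWt_eq_biWeight hm 2 0 0 0 1 0 rfl
  have h₈ : slWt m (e m 2 + 2 • e m m) = biWeight m ![1, 1, 0] ![2, 0, 0] := by
    simpa using slWt_eq_biWeight hm 0 1 0 2 0 0 rfl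
  simp only [symCubeMult, map_add, Finsupp.liftAddHom_apply_single, multiplesHom_apply, h₁, h₂,
    h₃, h₄, h₅, h₆, h₇, h₈, slWt_zero, zero_add, one_smul, biAlt]

lemma decomp_symCube (hm : 5 ≤ m) {f g : CharRing (m + 1)} (hf : IsCharA m (e m 1 + e m m) f)
    (hg : (6 : ℤ) • g = f ^ 3 + 3 • (f * pw 2 f) + 2 • pw 3 f) : Decomp m g (symCubeMult m) := by
  obtain rfl := isCharA_unique hf (isCharA_adjoint hm)
  rw [decomp_iff_liftAddHom, liftAddHom_symCubeMult hm]
  apply smul_right_injective _ (show (6 : ℤ) ≠ 0 by norm_num)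
  simp only [← smul_mul_assoc, hg, pw_eq_dilate, map_sub, map_mul, map_one, dilate_powerSum]
  norm_num
  linear_combination altA_rhoA_mul_symCube hm

lemma symCubeMult_adjoint (hm : 5 ≤ m) : symCubeMult m (e m 1 + e m m) = 2 := by
  have ne_of_first (d : Fin m → ℕ) (h : d ⟨0, by omega⟩ ≠ 1) : e m 1 + e m m ≠ d := by
    rintro rfl
    exact h (by simp [e]; omega)
  have ne_of_second (d : Fin m → ℕ) (h : d ⟨1, by omega⟩ ≠ 0) : e m 1 + e m m ≠ d := by
    rintro rfl
    exact h (by simp [e]; omega)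
  rw [symCubeMult]
  simp only [Finsupp.add_apply, Finsupp.single_eq_same]
  rw [Finsupp.single_eq_of_ne (ne_of_first (3 • e m 1 + 3 • e m m) (by simp [e]; omega)),
    Finsupp.single_eq_of_ne (ne_of_first (2 • e m 1 + 2 • e m m) (by simp [e]; omega)),
    Finsupp.single_eq_of_ne (ne_of_second (e m 2 + e m (m - 1)) (by simp [e])),
    Finsupp.single_eq_of_ne (ne_of_first (e m 3 + e m (m - 2)) (by simp [e]; omega)),
    Finsupp.single_eq_of_ne (ne_of_second (e m 1 + e m 2 + e m (m - 1) + e m m) (by simp [e])),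
    Finsupp.single_eq_of_ne (ne_of_first (2 • e m 1 + e m (m - 1)) (by simp [e]; omega)),
    Finsupp.single_eq_of_ne (ne_of_second (e m 2 + 2 • e m m) (by simp [e])),
    Finsupp.single_eq_of_ne (ne_of_first 0 (by simp))]
  rfl

end SymCube

end MFPaper

/-- **Lemma 4.6(ix).**  Let `X = A_m` with `m ≥ 5`.  Then the symmetric cube of the
adjoint module decomposes as
`S³(V_X(ω₁+ω_m)) = V(3ω₁+3ω_m) ⊕ V(2ω₁+2ω_m) ⊕ V(ω₁+ω_m)⊕² ⊕ V(ω₂+ω_{m-1})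
  ⊕ V(ω₃+ω_{m-2}) ⊕ V(ω₁+ω₂+ω_{m-1}+ω_m) ⊕ V(2ω₁+ω_{m-1}) ⊕ V(ω₂+2ω_m) ⊕ V(0)`
(for `m = 5` the term `V(ω₃+ω_{m-2})` is `V(2ω₃)`, as encoded automatically).
In particular `S³` is not multiplicity-free: it contains `V(ω₁+ω_m)` with multiplicity
exactly `2`.  Here `g`, the character of `S³V_X(ω₁+ω_m)`, is characterised by
`6g = f³ + 3f·f^{[2]} + 2f^{[3]}` where `f` is the character of the adjoint module. -/
theorem thm_sym_cube_adjoint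
    (m : ℕ) (hm : 5 ≤ m) :
    ∀ f, IsCharA m (e m 1 + e m m) f →
    ∀ g : CharRing (m + 1),
      (6 : ℤ) • g = f ^ 3 + 3 • (f * pw 2 f) + 2 • pw 3 f →
      Decomp m g
        (Finsupp.single (3 • e m 1 + 3 • e m m) 1
          + Finsupp.single (2 • e m 1 + 2 • e m m) 1
          + Finsupp.single (e m 1 + e m m) 2
          + Finsupp.single (e m 2 + e m (m - 1)) 1
          + Finsupp.single (e m 3 + e m (m - 2)) 1
          + Finsupp.single (e m 1 + e m 2 + e m (m - 1) + e m m) 1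
          + Finsupp.single (2 • e m 1 + e m (m - 1)) 1
          + Finsupp.single (e m 2 + 2 • e m m) 1
          + Finsupp.single 0 1)
      ∧ (∀ c : (Fin m → ℕ) →₀ ℕ, Decomp m g c → c (e m 1 + e m m) = 2) := by
  intro f hf g hg
  have hdecomp : Decomp m g (symCubeMult m) := decomp_symCube hm hf hg
  refine ⟨hdecomp, fun c hc => ?_⟩
  rw [decomp_unique hc hdecomp, symCubeMult_adjoint hm]
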